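/- arXiv:2603.12024 — 2 statements merged into one kernel-verified Lean document; each statement's English description precedes it below -/
import Mathlib

section
/- If a PMD {M^{a|x}} is star-compatible with respect to x*, then the prepare-and-measure guessing probability is 1: there exists a feasible solution {G^{a,e|x}} of the guessing SDP with Σ_e Tr[G^{e,e|x*} ρ_A] = 1 for any density operator ρ_A. Explicitly, taking G^{a,e|x} = J^{a,e|x} for x ≠ x* (the joint POVMs witnessing star-compatibility) and G^{a,e|x*} = δ_{a,e} M^{a|x*} achieves this. -/
open Matrix BigOperators ComplexOrder

section GuessingStrategy

variable {A X E : Type*} [DecidableEq A] [DecidableEq X]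

/-- The eavesdropper's strategy built from joint measurements `J` with the central setting `xs`:
a perfect copy of the outcome at `xs`, and at any other setting the joint measurement, whose second
outcome is the guess. The guess thus has the statistics of `M xs` at every setting. The arguments of
`starGuess M J xs` are the setting, the outcome and the guess, in this order. -/
def starGuess [Zero E] (M : X → A → E) (J : X → A → A → E) (xs x : X) (a e : A) : E :=
  if x = xs then if a = e then M xs a else 0 else J x a e

variable (M : X → A → E) (J : X → A → A → E) (xs : X)

theorem starGuess_center [Zero E] (a e : A) :
    starGuess M J xs xs a e = if a = e then M xs a else 0 :=
  if_pos rfl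

theorem starGuess_center_diag [Zero E] (e : A) : starGuess M J xs xs e e = M xs e := by
  rw [starGuess_center, if_pos rfl]

variable {xs} in
theorem starGuess_of_ne [Zero E] {x : X} (hx : x ≠ xs) (a e : A) :
    starGuess M J xs x a e = J x a e :=
  if_neg hx

variable [Fintype A] [AddCommMonoid E]

theorem sum_guess_starGuess_center (a : A) : ∑ e, starGuess M J xs xs a e = M xs a := by
  simp only [starGuess_center, Finset.sum_ite_eq, Finset.mem_univ, if_true]

theorem sum_outcome_starGuess_center (e : A) : ∑ a, starGuess M J xs xs a e = M xs e := by
  simp only [starGuess_center, Finset.sum_ite_eq', Finset.mem_univ, if_true]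

end GuessingStrategy

theorem posSemidef_starGuess {A X n R : Type*} [DecidableEq A] [DecidableEq X] [Ring R]
    [PartialOrder R] [StarRing R] {M : X → A → Matrix n n R} {J : X → A → A → Matrix n n R} {xs : X}
    (hM : ∀ a, (M xs a).PosSemidef) (hJ : ∀ x, x ≠ xs → ∀ a b, (J x a b).PosSemidef)
    (x : X) (a e : A) : (starGuess M J xs x a e).PosSemidef := by
  unfold starGuess
  split_ifs with hx
  exacts [hM a, .zero, hJ x hx a e]

section GuessingProbability

variable {A X n R : Type*} [Fintype A] [Fintype n]

/-- The objective of the guessing semidefinite program: the probability, in the state `ρ`, that the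
guess agrees with the outcome, where `F` is the joint measurement of outcome and guess. -/
def guessProb [NonUnitalNonAssocSemiring R] (F : A → A → Matrix n n R) (ρ : Matrix n n R) : R :=
  ∑ e, (F e e * ρ).trace

variable [DecidableEq n] [NonAssocSemiring R]

theorem sum_trace_mul_of_sum_eq_one {F : A → Matrix n n R} (hF : ∑ a, F a = 1)
    (ρ : Matrix n n R) : ∑ a, (F a * ρ).trace = ρ.trace := by
  rw [← trace_sum, ← Finset.sum_mul, hF, one_mul]

theorem guessProb_starGuess_center [DecidableEq A] [DecidableEq X] {M : X → A → Matrix n n R}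
    {J : X → A → A → Matrix n n R} {xs : X} (hM : ∑ a, M xs a = 1) (ρ : Matrix n n R) :
    guessProb (starGuess M J xs xs) ρ = ρ.trace := by
  simpa only [guessProb, starGuess_center_diag] using sum_trace_mul_of_sum_eq_one hM ρ

end GuessingProbability

section PrepareAndMeasure

variable {A X n R : Type*} [Fintype A] [Ring R] [PartialOrder R] [StarRing R]

/-- A positive operator-valued measure with outcomes in `A`: the measurement made at one setting. -/
structure IsPOVM [DecidableEq n] (F : A → Matrix n n R) : Prop where
  posSemidef : ∀ a, (F a).PosSemidef
  sum_eq_one : ∑ a, F a = 1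

/-- The family `J` witnesses star-compatibility of the measurements `M` with respect to `xs`: for
`x ≠ xs`, the operators `J x a b` are a joint measurement of `M x` and `M xs`. Normalization of
`J x` is inherited from its marginals, and `J xs` carries no meaning. -/
structure IsStarJoint (M : X → A → Matrix n n R) (xs : X) (J : X → A → A → Matrix n n R) :
    Prop where
  posSemidef : ∀ x, x ≠ xs → ∀ a b, (J x a b).PosSemidef
  sum_right : ∀ x, x ≠ xs → ∀ a, ∑ b, J x a b = M x a
  sum_left : ∀ x, x ≠ xs → ∀ b, ∑ a, J x a b = M xs b

/-- Feasibility in the guessing semidefinite program: `G x a e` is the operator for outcome `a` and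
guess `e` at setting `x`. The last condition makes the statistics of the guess independent of the
setting. -/
structure IsGuessFeasible (M : X → A → Matrix n n R) (xs : X) (G : X → A → A → Matrix n n R) :
    Prop where
  posSemidef : ∀ x a e, (G x a e).PosSemidef
  sum_guess : ∀ x a, ∑ e, G x a e = M x a
  sum_outcome : ∀ x e, ∑ a, G x a e = ∑ a, G xs a e

variable [DecidableEq A] [DecidableEq X] {M : X → A → Matrix n n R} {xs : X}
  {J : X → A → A → Matrix n n R}

theorem IsStarJoint.isGuessFeasible_starGuess (hJ : IsStarJoint M xs J)
    (hM : ∀ a, (M xs a).PosSemidef) : IsGuessFeasible M xs (starGuess M J xs) where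
  posSemidef := posSemidef_starGuess hM hJ.posSemidef
  sum_guess x a := by
    obtain rfl | hx := eq_or_ne x xs
    · exact sum_guess_starGuess_center M J x a
    · simpa only [starGuess_of_ne M J hx] using hJ.sum_right x hx a
  sum_outcome x e := by
    obtain rfl | hx := eq_or_ne x xs
    · rfl
    · simpa only [starGuess_of_ne M J hx, sum_outcome_starGuess_center] using hJ.sum_left x hx e

theorem starCompatible_guess_one_general [Fintype n] [DecidableEq n]
    (hM : IsPOVM (M xs)) (hJ : IsStarJoint M xs J) :
    IsGuessFeasible M xs (starGuess M J xs) ∧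
      ∀ ρ : Matrix n n R, guessProb (starGuess M J xs xs) ρ = ρ.trace :=
  ⟨hJ.isGuessFeasible_starGuess hM.posSemidef, guessProb_starGuess_center hM.sum_eq_one⟩

end PrepareAndMeasure

/-- star-compatible PMDs admit a feasible guessing strategy achieving
guessing probability 1 (for every density operator ρ_A). -/
theorem starCompatible_guess_one (d : ℕ) (hd : 0 < d)
    (A X : Type) [Fintype A] [DecidableEq A] [Fintype X] [DecidableEq X] (xs : X)
    (M : X → A → Matrix (Fin d) (Fin d) ℂ)
    (hpsd : ∀ x a, (M x a).PosSemidef) (hpovm : ∀ x, ∑ a, M x a = 1)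
    (J : X → A → A → Matrix (Fin d) (Fin d) ℂ)
    (hJpsd : ∀ x, x ≠ xs → ∀ a b, (J x a b).PosSemidef)
    (hJsum : ∀ x, x ≠ xs → ∑ a, ∑ b, J x a b = 1)
    (hJm1 : ∀ x, x ≠ xs → ∀ a, ∑ b, J x a b = M x a)
    (hJm2 : ∀ x, x ≠ xs → ∀ b, ∑ a, J x a b = M xs b) :
    ∃ G : X → A → A → Matrix (Fin d) (Fin d) ℂ,
      (∀ x a e, (G x a e).PosSemidef) ∧
      (∀ x a, ∑ e, G x a e = M x a) ∧
      (∀ x e, ∑ a, G x a e = ∑ a, G xs a e) ∧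
      (G = fun x a e => if x = xs then (if a = e then M xs a else 0) else J x a e) ∧
      (∀ ρA : Matrix (Fin d) (Fin d) ℂ, ρA.PosSemidef → ρA.trace = 1 →
        ∑ e, (G xs e e * ρA).trace = 1) := by
  have ⟨⟨hpos, hguess, houtcome⟩, hprob⟩ :=
    starCompatible_guess_one_general ⟨hpsd xs, hpovm xs⟩ ⟨hJpsd, hJm1, hJm2⟩
  exact ⟨_, hpos, hguess, houtcome, rfl, fun ρA _ hρ => (hprob ρA).trans hρ⟩
end

section
/- Theorem (weight lower bound): for a PMD {M^{a|x}} on H_A with star-incompatibility weight W^{x*}(M) (the minimal w ∈ [0,1] such that M^{a|x} = (1−w)F^{a|x} + wE^{a|x} with {F} star-compatible w.r.t. x* and {E} a PMD), and for any bipartite state ρ_AB, the assemblage guessing probability satisfies W^{x*}(M) ≥ (|A|/(|A|−1)) · (1 − p_guess^{x*}(σ(M, ρ_AB))), equivalently p_guess^{x*}(σ(M, ρ_AB)) ≥ 1 − W^{x*}(M)(1 − 1/|A|), assuming an optimal decomposition achieving the weight exists. -/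
open Matrix BigOperators Kronecker ComplexOrder

/-- Partial trace over the first tensor factor. -/
noncomputable def trA {dA dB : Type*} [Fintype dA]
    (M : Matrix (dA × dB) (dA × dB) ℂ) : Matrix dB dB ℂ :=
  Matrix.of fun j j' => ∑ i, M (i, j) (i, j')

/-- The guessing probability of an assemblage `σ` for target setting `xs`. -/
noncomputable def pguessAsm {dB : Type*} [Fintype dB] {A X : Type} [Fintype A] [Fintype X]
    (σ : X → A → Matrix dB dB ℂ) (xs : X) : ℝ :=
  sSup {r : ℝ | ∃ τ : X → A → A → Matrix dB dB ℂ,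
    (∀ x a e, (τ x a e).PosSemidef) ∧
    (∀ x a, ∑ e, τ x a e = σ x a) ∧
    (∀ x e, ∑ a, τ x a e = ∑ a, τ xs a e) ∧
    r = (∑ e, (τ xs e e).trace).re}

/-- Star-compatibility of a PMD `F` w.r.t. the setting `xs`. -/
def StarCompatible {dA : Type*} [Fintype dA] [DecidableEq dA] {A X : Type}
    [Fintype A] (F : X → A → Matrix dA dA ℂ) (xs : X) : Prop :=
  ∃ J : X → A → A → Matrix dA dA ℂ,
    (∀ x, x ≠ xs → ∀ a b, (J x a b).PosSemidef) ∧
    (∀ x, x ≠ xs → ∑ a, ∑ b, J x a b = 1) ∧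
    (∀ x, x ≠ xs → ∀ a, ∑ b, J x a b = F x a) ∧
    (∀ x, x ≠ xs → ∀ b, ∑ a, J x a b = F xs b)

/-!
If a PMD is star-compatible at `xs`, the assemblages it steers can be guessed perfectly at `xs`:
the parent measurements, with a diagonal parent at `xs` itself, produce the guess along with the
outcome. For any PMD, a uniformly random guess succeeds with probability `1 / |A|`. Steering by a
fixed state is linear and the guessing probability is concave, so a mixture of the two kinds with
weights `1 - w` and `w` is guessed with probability at least `(1 - w) + w / |A|`.
-/

section PartialTrace

variable {dA dB : Type*} [Fintype dA]

theorem trA_eq_sum_submatrix (R : Matrix (dA × dB) (dA × dB) ℂ) :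
    trA R = ∑ i, R.submatrix (Prod.mk i) (Prod.mk i) := by
  ext j j'
  simp [trA, Matrix.sum_apply]

theorem trA_add (R S : Matrix (dA × dB) (dA × dB) ℂ) : trA (R + S) = trA R + trA S := by
  simp only [trA_eq_sum_submatrix, submatrix_add, Pi.add_apply, Finset.sum_add_distrib]

theorem trA_smul (c : ℂ) (R : Matrix (dA × dB) (dA × dB) ℂ) : trA (c • R) = c • trA R := by
  simp only [trA_eq_sum_submatrix, submatrix_smul, Pi.smul_apply, Finset.smul_sum]

theorem trace_trA [Fintype dB] (R : Matrix (dA × dB) (dA × dB) ℂ) :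
    (trA R).trace = R.trace := by
  simp only [trA, trace, diag_apply, of_apply, Fintype.sum_prod_type_right]

theorem posSemidef_trA {R : Matrix (dA × dB) (dA × dB) ℂ} (hR : R.PosSemidef) :
    (trA R).PosSemidef := by
  rw [trA_eq_sum_submatrix]
  exact posSemidef_sum _ fun i _ => hR.submatrix _

theorem trA_kronecker_one_mul_comm [Fintype dB] [DecidableEq dB] (K : Matrix dA dA ℂ)
    (R : Matrix (dA × dB) (dA × dB) ℂ) :
    trA ((K ⊗ₖ (1 : Matrix dB dB ℂ)) * R) = trA (R * (K ⊗ₖ (1 : Matrix dB dB ℂ))) := by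
  ext j j'
  simp only [trA, of_apply, mul_apply, kroneckerMap_apply, one_apply, Fintype.sum_prod_type,
    mul_ite, ite_mul, mul_one, mul_zero, zero_mul, Finset.sum_ite_eq, Finset.sum_ite_eq',
    Finset.mem_univ, if_true]
  rw [Finset.sum_comm]
  simp only [mul_comm]

end PartialTrace

section Steering

variable {dA dB : Type*} [Fintype dA] [Fintype dB] [DecidableEq dB]
  {ρ : Matrix (dA × dB) (dA × dB) ℂ}

/-- The operator on the second factor to which the effect `N` on the first factor steers `ρ`,
bundled as a linear map in `N`. -/
noncomputable def steer (ρ : Matrix (dA × dB) (dA × dB) ℂ) :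
    Matrix dA dA ℂ →ₗ[ℂ] Matrix dB dB ℂ where
  toFun N := trA ((N ⊗ₖ (1 : Matrix dB dB ℂ)) * ρ)
  map_add' N N' := by rw [add_kronecker, add_mul, trA_add]
  map_smul' c N := by rw [smul_kronecker, smul_mul_assoc, trA_smul, RingHom.id_apply]

theorem steer_apply (ρ : Matrix (dA × dB) (dA × dB) ℂ) (N : Matrix dA dA ℂ) :
    steer ρ N = trA ((N ⊗ₖ (1 : Matrix dB dB ℂ)) * ρ) := rfl

theorem trace_steer_one [DecidableEq dA] (ρ : Matrix (dA × dB) (dA × dB) ℂ) :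
    (steer ρ 1).trace = ρ.trace := by
  rw [steer_apply, one_kronecker_one, one_mul, trace_trA]

theorem steer_conjTranspose_mul_self (ρ : Matrix (dA × dB) (dA × dB) ℂ) (C : Matrix dA dA ℂ) :
    steer ρ (Cᴴ * C) =
      trA ((C ⊗ₖ (1 : Matrix dB dB ℂ)) * ρ * (C ⊗ₖ (1 : Matrix dB dB ℂ))ᴴ) := by
  have hfactor : (Cᴴ * C) ⊗ₖ (1 : Matrix dB dB ℂ) =
      (Cᴴ ⊗ₖ (1 : Matrix dB dB ℂ)) * (C ⊗ₖ (1 : Matrix dB dB ℂ)) := by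
    rw [← mul_kronecker_mul, one_mul]
  rw [steer_apply, hfactor, mul_assoc, trA_kronecker_one_mul_comm, conjTranspose_kronecker,
    conjTranspose_one]

open scoped MatrixOrder in
theorem posSemidef_steer (hρ : ρ.PosSemidef) {N : Matrix dA dA ℂ} (hN : N.PosSemidef) :
    (steer ρ N).PosSemidef := by
  classical
  obtain ⟨C, rfl⟩ := CStarAlgebra.nonneg_iff_eq_star_mul_self.mp hN.nonneg
  rw [star_eq_conjTranspose, steer_conjTranspose_mul_self]
  exact posSemidef_trA (hρ.mul_mul_conjTranspose_same _)

end Steering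

/-- A family of operators, indexed by a setting and an outcome, is an assemblage (not necessarily
normalized) if it is positive semidefinite and no-signalling. -/
structure IsAssemblage {d A X : Type*} [Fintype A] (σ : X → A → Matrix d d ℂ) : Prop where
  posSemidef : ∀ x a, (σ x a).PosSemidef
  noSignalling : ∀ x y, ∑ a, σ x a = ∑ a, σ y a

/-- A programmable measurement device: a family of POVMs indexed by a setting. -/
structure IsPMD {d A X : Type*} [Fintype d] [DecidableEq d] [Fintype A]
    (M : X → A → Matrix d d ℂ) : Prop where
  posSemidef : ∀ x a, (M x a).PosSemidef
  sum_eq_one : ∀ x, ∑ a, M x a = 1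

/-- The families `τ` over which the guessing probability of `σ` at the setting `xs` is optimized:
`τ x a e` refines `σ x a` by the guess `e`, whose marginal is independent of the setting. -/
structure IsGuessingExtension {d A X : Type*} [Fintype A] (σ : X → A → Matrix d d ℂ) (xs : X)
    (τ : X → A → A → Matrix d d ℂ) : Prop where
  posSemidef : ∀ x a e, (τ x a e).PosSemidef
  sum_guess : ∀ x a, ∑ e, τ x a e = σ x a
  sum_outcome : ∀ x e, ∑ a, τ x a e = ∑ a, τ xs a e

/-- The probability that the guess agrees with the outcome at the setting `xs`, as a real-linear
functional of the extension. -/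
noncomputable def guessValue {d A X : Type*} [Fintype d] [Fintype A] (xs : X) :
    (X → A → A → Matrix d d ℂ) →ₗ[ℝ] ℝ where
  toFun τ := (∑ e, (τ xs e e).trace).re
  map_add' τ τ' := by simp [Finset.sum_add_distrib]
  map_smul' c τ := by simp [Finset.mul_sum]

theorem guessValue_apply {d A X : Type*} [Fintype d] [Fintype A] (xs : X)
    (τ : X → A → A → Matrix d d ℂ) : guessValue xs τ = (∑ e, (τ xs e e).trace).re := rfl

theorem IsPMD.isAssemblage_steer {dA dB A X : Type*} [Fintype dA] [DecidableEq dA] [Fintype dB]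
    [DecidableEq dB] [Fintype A] {M : X → A → Matrix dA dA ℂ} (hM : IsPMD M)
    {ρ : Matrix (dA × dB) (dA × dB) ℂ} (hρ : ρ.PosSemidef) :
    IsAssemblage fun x a => steer ρ (M x a) where
  posSemidef x a := posSemidef_steer hρ (hM.posSemidef x a)
  noSignalling x y := by simp only [← map_sum, hM.sum_eq_one]

theorem convex_setOf_isAssemblage {d A X : Type*} [Fintype A] :
    Convex ℝ {σ : X → A → Matrix d d ℂ | IsAssemblage σ} := by
  intro σ hσ σ' hσ' s t hs ht _
  refine ⟨fun x a => ((hσ.posSemidef x a).smul hs).add ((hσ'.posSemidef x a).smul ht),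
    fun x y => ?_⟩
  simp only [Pi.add_apply, Pi.smul_apply, Finset.sum_add_distrib, ← Finset.smul_sum,
    hσ.noSignalling x y, hσ'.noSignalling x y]

namespace IsGuessingExtension

variable {d A X : Type*} [Fintype A] {σ σ' : X → A → Matrix d d ℂ} {xs : X}
  {τ τ' : X → A → A → Matrix d d ℂ}

theorem add (hτ : IsGuessingExtension σ xs τ) (hτ' : IsGuessingExtension σ' xs τ') :
    IsGuessingExtension (σ + σ') xs (τ + τ') where
  posSemidef x a e := (hτ.posSemidef x a e).add (hτ'.posSemidef x a e)
  sum_guess x a := by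
    simp only [Pi.add_apply, Finset.sum_add_distrib, hτ.sum_guess, hτ'.sum_guess]
  sum_outcome x e := by
    simp only [Pi.add_apply, Finset.sum_add_distrib, hτ.sum_outcome x, hτ'.sum_outcome x]

theorem smul {c : ℝ} (hc : 0 ≤ c) (hτ : IsGuessingExtension σ xs τ) :
    IsGuessingExtension (c • σ) xs (c • τ) where
  posSemidef x a e := (hτ.posSemidef x a e).smul hc
  sum_guess x a := by simp only [Pi.smul_apply, ← Finset.smul_sum, hτ.sum_guess]
  sum_outcome x e := by simp only [Pi.smul_apply, ← Finset.smul_sum, hτ.sum_outcome x]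

theorem map_steer {dA dB : Type*} [Fintype dA] [Fintype dB] [DecidableEq dB]
    {M : X → A → Matrix dA dA ℂ} {J : X → A → A → Matrix dA dA ℂ}
    (hJ : IsGuessingExtension M xs J) {ρ : Matrix (dA × dB) (dA × dB) ℂ} (hρ : ρ.PosSemidef) :
    IsGuessingExtension (fun x a => steer ρ (M x a)) xs fun x a e => steer ρ (J x a e) where
  posSemidef x a e := posSemidef_steer hρ (hJ.posSemidef x a e)
  sum_guess x a := by rw [← map_sum, hJ.sum_guess]
  sum_outcome x e := by rw [← map_sum, ← map_sum, hJ.sum_outcome]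

theorem guessValue_le [Fintype d] (hτ : IsGuessingExtension σ xs τ) :
    guessValue xs τ ≤ (∑ a, σ xs a).trace.re := by
  have hdiag : ∑ e, (τ xs e e).trace ≤ ∑ a, (σ xs a).trace := by
    refine Finset.sum_le_sum fun a _ => ?_
    rw [← hτ.sum_guess, trace_sum]
    exact Finset.single_le_sum (f := fun e => (τ xs a e).trace)
      (fun e _ => (hτ.posSemidef xs a e).trace_nonneg) (Finset.mem_univ a)
  rw [trace_sum]
  exact (Complex.le_def.mp hdiag).1

end IsGuessingExtension

theorem IsAssemblage.isGuessingExtension_uniform {d A X : Type*} [Fintype A]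
    {σ : X → A → Matrix d d ℂ} (hσ : IsAssemblage σ) (xs : X) :
    IsGuessingExtension σ xs fun x a _ => (Fintype.card A : ℝ)⁻¹ • σ x a where
  posSemidef x a _ := (hσ.posSemidef x a).smul (by positivity)
  sum_guess x a := by
    have hcard : (Fintype.card A : ℝ) ≠ 0 := by
      have : Nonempty A := ⟨a⟩
      exact_mod_cast Fintype.card_ne_zero
    rw [Finset.sum_const, Finset.card_univ, ← Nat.cast_smul_eq_nsmul ℝ, smul_inv_smul₀ hcard]
  sum_outcome x _ := by rw [← Finset.smul_sum, ← Finset.smul_sum, hσ.noSignalling x xs]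

theorem StarCompatible.exists_isGuessingExtension {d : Type*} {A X : Type} [Fintype d]
    [DecidableEq d] [Fintype A] {F : X → A → Matrix d d ℂ} {xs : X} (hF : StarCompatible F xs)
    (hxs : ∀ a, (F xs a).PosSemidef) :
    ∃ J, IsGuessingExtension F xs J ∧ ∀ a, J xs a a = F xs a := by
  classical
  obtain ⟨J, hJ, -, hJF, hJxs⟩ := hF
  let D : A → A → Matrix d d ℂ := fun a => Pi.single a (F xs a)
  have hDcol : ∀ b, ∑ a, D a b = F xs b := fun b => by simp [D, Pi.single_apply]
  have houtcome : ∀ x b, ∑ a, Function.update J xs D x a b = F xs b := fun x b => by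
    obtain rfl | hx := eq_or_ne x xs
    · simpa using hDcol b
    · simpa [hx] using hJxs x hx b
  refine ⟨Function.update J xs D, ⟨fun x a b => ?_, fun x a => ?_, fun x b => ?_⟩,
    fun a => by simp [D]⟩
  · obtain rfl | hx := eq_or_ne x xs
    · obtain rfl | hab := eq_or_ne b a
      · simpa [D] using hxs b
      · simpa [D, hab] using PosSemidef.zero
    · simpa [hx] using hJ x hx a b
  · obtain rfl | hx := eq_or_ne x xs
    · simp [D]
    · simpa [hx] using hJF x hx a
  · rw [houtcome, houtcome]

section GuessingProbability

variable {d : Type*} {A X : Type} [Fintype d] [Fintype A]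
  {σ : X → A → Matrix d d ℂ} {xs : X} {τ : X → A → A → Matrix d d ℂ}

theorem bddAbove_guessValue_image (σ : X → A → Matrix d d ℂ) (xs : X) :
    BddAbove (guessValue xs '' {τ | IsGuessingExtension σ xs τ}) :=
  ⟨(∑ a, σ xs a).trace.re, Set.forall_mem_image.mpr fun _ hτ => hτ.guessValue_le⟩

variable [Fintype X]

theorem pguessAsm_eq_sSup_image (σ : X → A → Matrix d d ℂ) (xs : X) :
    pguessAsm σ xs = sSup (guessValue xs '' {τ | IsGuessingExtension σ xs τ}) := by
  refine congrArg sSup (Set.ext fun r => exists_congr fun τ => ?_)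
  exact ⟨fun ⟨hpos, hguess, houtcome, hr⟩ => ⟨⟨hpos, hguess, houtcome⟩, hr.symm⟩,
    fun ⟨hτ, hr⟩ => ⟨hτ.posSemidef, hτ.sum_guess, hτ.sum_outcome, hr.symm⟩⟩

theorem IsGuessingExtension.guessValue_le_pguessAsm (hτ : IsGuessingExtension σ xs τ) :
    guessValue xs τ ≤ pguessAsm σ xs := by
  rw [pguessAsm_eq_sSup_image]
  exact le_csSup (bddAbove_guessValue_image σ xs) (Set.mem_image_of_mem _ hτ)

theorem concaveOn_pguessAsm (xs : X) :
    ConcaveOn ℝ {σ : X → A → Matrix d d ℂ | IsAssemblage σ} fun σ => pguessAsm σ xs := by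
  refine ⟨convex_setOf_isAssemblage, fun σ hσ σ' hσ' s t hs ht _ => ?_⟩
  have hne : ∀ {σ : X → A → Matrix d d ℂ}, IsAssemblage σ →
      (guessValue xs '' {τ | IsGuessingExtension σ xs τ}).Nonempty :=
    fun hσ => Set.Nonempty.image _ ⟨_, hσ.isGuessingExtension_uniform xs⟩
  simp only [pguessAsm_eq_sSup_image σ, pguessAsm_eq_sSup_image σ',
    ← Real.sSup_smul_of_nonneg hs, ← Real.sSup_smul_of_nonneg ht]
  rw [← csSup_add (hne hσ).smul_set ((bddAbove_guessValue_image σ xs).smul_of_nonneg hs)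
    (hne hσ').smul_set ((bddAbove_guessValue_image σ' xs).smul_of_nonneg ht)]
  refine csSup_le ((hne hσ).smul_set.add (hne hσ').smul_set) ?_
  rintro _ ⟨_, ⟨_, ⟨τ, hτ, rfl⟩, rfl⟩, _, ⟨_, ⟨τ', hτ', rfl⟩, rfl⟩, rfl⟩
  simpa using ((hτ.smul hs).add (hτ'.smul ht)).guessValue_le_pguessAsm

theorem IsAssemblage.trace_div_card_le_pguessAsm (hσ : IsAssemblage σ) (xs : X) :
    (∑ a, σ xs a).trace.re / Fintype.card A ≤ pguessAsm σ xs := by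
  have hvalue : guessValue xs (fun x a (_ : A) => (Fintype.card A : ℝ)⁻¹ • σ x a) =
      (∑ a, σ xs a).trace.re / Fintype.card A := by
    simp only [guessValue_apply, trace_smul, ← Finset.smul_sum, ← trace_sum, Complex.smul_re,
      smul_eq_mul, div_eq_inv_mul]
  exact hvalue ▸ (hσ.isGuessingExtension_uniform xs).guessValue_le_pguessAsm

end GuessingProbability

section SteeredAssemblages

variable {dA dB : Type*} {A X : Type} [Fintype dA] [DecidableEq dA] [Fintype dB] [DecidableEq dB]
  [Fintype A] {M F E : X → A → Matrix dA dA ℂ} {xs : X}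
  {ρ : Matrix (dA × dB) (dA × dB) ℂ}

theorem IsPMD.trace_sum_steer (hM : IsPMD M) (ρ : Matrix (dA × dB) (dA × dB) ℂ) (x : X) :
    (∑ a, steer ρ (M x a)).trace = ρ.trace := by
  rw [← map_sum, hM.sum_eq_one, trace_steer_one]

variable [Fintype X]

theorem IsPMD.trace_div_card_le_pguessAsm_steer (hM : IsPMD M) (hρ : ρ.PosSemidef) (xs : X) :
    ρ.trace.re / Fintype.card A ≤ pguessAsm (fun x a => steer ρ (M x a)) xs :=
  hM.trace_sum_steer ρ xs ▸ (hM.isAssemblage_steer hρ).trace_div_card_le_pguessAsm xs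

theorem StarCompatible.trace_le_pguessAsm_steer (hcompat : StarCompatible F xs) (hF : IsPMD F)
    (hρ : ρ.PosSemidef) : ρ.trace.re ≤ pguessAsm (fun x a => steer ρ (F x a)) xs := by
  obtain ⟨J, hJ, hdiag⟩ := hcompat.exists_isGuessingExtension (hF.posSemidef xs)
  have hvalue : guessValue xs (fun x a e => steer ρ (J x a e)) = ρ.trace.re := by
    simp only [guessValue_apply, hdiag, ← trace_sum, hF.trace_sum_steer]
  exact hvalue ▸ (hJ.map_steer hρ).guessValue_le_pguessAsm

theorem weight_lower_bound_general {w : ℝ} (hw0 : 0 ≤ w) (hw1 : w ≤ 1) (hF : IsPMD F)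
    (hE : IsPMD E)
    (hdecomp : ∀ x a, M x a = ((1 - w : ℝ) : ℂ) • F x a + ((w : ℝ) : ℂ) • E x a)
    (hcompat : StarCompatible F xs) (hρ : ρ.PosSemidef) :
    ρ.trace.re * (1 - w * (1 - 1 / Fintype.card A)) ≤
      pguessAsm (fun x a => steer ρ (M x a)) xs := by
  have hw : 0 ≤ 1 - w := sub_nonneg.mpr hw1
  have hsteer : (fun x a => steer ρ (M x a)) =
      (1 - w) • (fun x a => steer ρ (F x a)) + w • fun x a => steer ρ (E x a) := by
    ext1 x
    ext1 a
    simp only [hdecomp, Complex.coe_smul, map_add, LinearMap.map_smul_of_tower, Pi.add_apply,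
      Pi.smul_apply]
  calc ρ.trace.re * (1 - w * (1 - 1 / Fintype.card A))
      = (1 - w) * ρ.trace.re + w * (ρ.trace.re / Fintype.card A) := by ring
    _ ≤ (1 - w) * pguessAsm (fun x a => steer ρ (F x a)) xs +
          w * pguessAsm (fun x a => steer ρ (E x a)) xs := by
        gcongr
        · exact hcompat.trace_le_pguessAsm_steer hF hρ
        · exact hE.trace_div_card_le_pguessAsm_steer hρ xs
    _ ≤ pguessAsm (fun x a => steer ρ (M x a)) xs :=
        hsteer ▸ (concaveOn_pguessAsm xs).2 (hF.isAssemblage_steer hρ)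
          (hE.isAssemblage_steer hρ) hw hw0 (sub_add_cancel 1 w)

end SteeredAssemblages

theorem div_sub_one_mul_one_sub_le_iff {n p w : ℝ} (hn : 1 < n) :
    n / (n - 1) * (1 - p) ≤ w ↔ 1 - w * (1 - 1 / n) ≤ p := by
  have hn0 : 0 < n := one_pos.trans hn
  have hn1 : 0 < n - 1 := sub_pos.mpr hn
  have hfactor : 1 - 1 / n = (n / (n - 1))⁻¹ := by field_simp
  rw [hfactor, sub_le_comm, ← div_eq_mul_inv, le_div_iff₀' (div_pos hn0 hn1)]

/-- the star-incompatibility weight of a PMD is bounded below by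
(|A|/(|A|−1))·(1 − p_guess of any assemblage it generates). -/
theorem weight_lower_bound {dA dB : Type*} [Fintype dA] [Fintype dB]
    [DecidableEq dA] [DecidableEq dB]
    (A X : Type) [Fintype A] [Nonempty A] [Fintype X] (xs : X)
    (hA : 2 ≤ Fintype.card A)
    (M : X → A → Matrix dA dA ℂ)
    (hpsd : ∀ x a, (M x a).PosSemidef) (hpovm : ∀ x, ∑ a, M x a = 1)
    (w : ℝ) (hw0 : 0 ≤ w) (hw1 : w ≤ 1)
    -- an optimal decomposition achieving the star-incompatibility weight `w`
    (F E : X → A → Matrix dA dA ℂ)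
    (hFpsd : ∀ x a, (F x a).PosSemidef) (hFpovm : ∀ x, ∑ a, F x a = 1)
    (hEpsd : ∀ x a, (E x a).PosSemidef) (hEpovm : ∀ x, ∑ a, E x a = 1)
    (hdecomp : ∀ x a, M x a = ((1 - w : ℝ) : ℂ) • F x a + ((w : ℝ) : ℂ) • E x a)
    (hFcompat : StarCompatible F xs)
    (hmin : ∀ w' : ℝ, 0 ≤ w' → w' ≤ 1 →
      ∀ F' E' : X → A → Matrix dA dA ℂ,
        (∀ x a, (F' x a).PosSemidef) → (∀ x, ∑ a, F' x a = 1) →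
        (∀ x a, (E' x a).PosSemidef) → (∀ x, ∑ a, E' x a = 1) →
        (∀ x a, M x a = ((1 - w' : ℝ) : ℂ) • F' x a + ((w' : ℝ) : ℂ) • E' x a) →
        StarCompatible F' xs → w ≤ w')
    (ρAB : Matrix (dA × dB) (dA × dB) ℂ) (hρ : ρAB.PosSemidef) (htr : ρAB.trace = 1) :
    let σ : X → A → Matrix dB dB ℂ :=
      fun x a => trA ((M x a ⊗ₖ (1 : Matrix dB dB ℂ)) * ρAB)
    (Fintype.card A : ℝ) / (Fintype.card A - 1) * (1 - pguessAsm σ xs) ≤ w ∧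
    1 - w * (1 - 1 / Fintype.card A) ≤ pguessAsm σ xs := by
  intro σ
  have hguess : 1 - w * (1 - 1 / Fintype.card A) ≤ pguessAsm σ xs := by
    simpa only [htr, Complex.one_re, one_mul] using! weight_lower_bound_general hw0 hw1
      ⟨hFpsd, hFpovm⟩ ⟨hEpsd, hEpovm⟩ hdecomp hFcompat hρ
  exact ⟨(div_sub_one_mul_one_sub_le_iff (by exact_mod_cast hA)).mpr hguess, hguess⟩
end
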